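/- arXiv:1509.08770 — 5 statements merged into one kernel-verified Lean document; each statement's English description precedes it below -/
import Mathlib

section
/- Let N ≥ 1 and let c : ZMod N → ℕ be a configuration on the N-cycle. If c' is obtained from c by a single toppling at a vertex v, then the classification invariant is preserved: ∑ i : ZMod N, i * (c' i : ZMod N) = ∑ i : ZMod N, i * (c i : ZMod N) in ZMod N. (Equivalently, ∑ i i·n_i mod N is unchanged, since (v-1) + (v+1) - 2v = 0 in ZMod N.) -/
/-- a single toppling at vertex `v` preserves the classification
invariant `∑ i, i * (c i : ZMod N)` in `ZMod N`. -/
theorem sandpile_topple_preserves_invariant (N : ℕ) [NeZero N]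
    (c c' : ZMod N → ℕ) (v : ZMod N)
    (hv : 2 ≤ c v)
    (h : ∀ i : ZMod N,
      c' i + 2 * (if i = v then 1 else 0) =
        c i + (if i = v - 1 then 1 else 0) + (if i = v + 1 then 1 else 0)) :
    ∑ i : ZMod N, i * (c' i : ZMod N) = ∑ i : ZMod N, i * (c i : ZMod N) := by
  -- The toppling relation cast to `ZMod N` and weighted by `i`, so that `2` can be subtracted.
  have key : ∀ i : ZMod N, i * (c' i : ZMod N) = i * (c i : ZMod N) +
      ((if i = v - 1 then i else 0) + (if i = v + 1 then i else 0)
        - 2 * (if i = v then i else 0)) := by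
    intro i
    have hi := congrArg (fun n : ℕ => i * (n : ZMod N)) (h i)
    push_cast at hi
    simp only [mul_add, mul_ite, mul_one, mul_zero] at hi ⊢
    split_ifs at hi ⊢ <;> linear_combination hi
  simp only [key, Finset.sum_add_distrib, Finset.sum_sub_distrib, ← Finset.mul_sum,
    Finset.sum_ite_eq', Finset.sum_ite_eq, Finset.mem_univ, if_true]
  ring
end

section
/- Let N ≥ 1 and let c : ZMod N → ℕ be a configuration on the N-cycle with fewer than N items in total (∑ i, c i < N). Then the terminal set is reached after a finite number of turns: there exists a configuration c' reachable from c by a finite sequence of topplings such that c' v ≤ 1 for every vertex v. -/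
/-!
The argument is the one showing that a chip-firing game with fewer chips than edges is finite.

Play any legal sequence of topplings, recording for each vertex the time of its last toppling
(`0` if it has never toppled).  Since its last toppling, a vertex has received one item from each
neighbour that toppled later and has lost none, so it holds at least as many items as it has such
neighbours.  Once every vertex has toppled, each of the `N` edges contributes one item in this
way (at the endpoint that toppled earlier), so there are at least `N` items.  Hence with fewer
than `N` items some vertex `w` never topples (`Reached.exists_unfired`).

The potential `∑ i, c i * k (N - k)`, where `k` is the residue of `i - w`, is nonnegative and drops
by exactly `2` at each toppling of a vertex other than `w` (`potential_topple`).  So the length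
of a legal sequence is bounded, and a sequence that cannot be extended ends in a stable
configuration.
-/

/-- The one-step toppling relation on configurations of the `N`-cycle. -/
def Topple (N : ℕ) (c c' : ZMod N → ℕ) : Prop :=
  ∃ v : ZMod N, 2 ≤ c v ∧ ∀ i : ZMod N,
    c' i + 2 * (if i = v then 1 else 0) =
      c i + (if i = v - 1 then 1 else 0) + (if i = v + 1 then 1 else 0)

/-- The weight `k (N - k)` of the residue `k` of `x`: a concave function on the cycle cut at `0`,
with second difference `-2` away from `0`. -/
def weight (N : ℕ) (x : ZMod N) : ℤ := (x.val : ℤ) * ((N : ℤ) - x.val)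

lemma weight_nonneg (N : ℕ) [NeZero N] (x : ZMod N) : 0 ≤ weight N x := by
  have h := ZMod.val_lt x
  unfold weight
  apply mul_nonneg <;> omega

lemma weight_laplacian (N : ℕ) [NeZero N] (x : ZMod N) (hx : x ≠ 0) :
    weight N (x - 1) + weight N (x + 1) + 2 = 2 * weight N x := by
  obtain ⟨m, rfl⟩ : ∃ m, N = m + 1 := ⟨N - 1, by have := NeZero.pos N; omega⟩
  have hlt := ZMod.val_lt x
  have hpos : 0 < x.val := Nat.pos_of_ne_zero fun h => hx ((ZMod.val_eq_zero x).1 h)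
  obtain ⟨k, hk⟩ : ∃ k, x.val = k + 1 := ⟨x.val - 1, by omega⟩
  have hxk : x = ((k + 1 : ℕ) : ZMod (m + 1)) := by
    rw [← hk, ZMod.natCast_zmod_val]
  have h1 : (x - 1).val = k := by
    have : x - 1 = ((k : ℕ) : ZMod (m + 1)) := by rw [hxk]; push_cast; ring
    rw [this, ZMod.val_natCast_of_lt (by omega)]
  -- If `x + 1` wraps around to `0`, the formula `(k + 2) (N - (k + 2))` still gives `0`.
  have h2 : weight (m + 1) (x + 1) = ((k : ℤ) + 2) * ((m : ℤ) + 1 - (k + 2)) := by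
    have h : x + 1 = ((k + 2 : ℕ) : ZMod (m + 1)) := by rw [hxk]; push_cast; ring
    unfold weight
    rw [h]
    by_cases hkm : k + 2 < m + 1
    · rw [ZMod.val_natCast_of_lt hkm]; push_cast; ring
    · have hkm : k + 2 = m + 1 := by omega
      have : (m : ℤ) + 1 = k + 2 := by exact_mod_cast hkm.symm
      rw [hkm, ZMod.natCast_self, ZMod.val_zero, this]; simp
  rw [h2]
  unfold weight
  rw [h1, hk]
  push_cast
  ring

/-- The potential of a configuration when the cycle is cut at the vertex `w`. -/
def potential (N : ℕ) [NeZero N] (w : ZMod N) (c : ZMod N → ℕ) : ℤ :=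
  ∑ i : ZMod N, (c i : ℤ) * weight N (i - w)

lemma potential_nonneg (N : ℕ) [NeZero N] (w : ZMod N) (c : ZMod N → ℕ) :
    0 ≤ potential N w c :=
  Finset.sum_nonneg fun i _ => mul_nonneg (by positivity) (weight_nonneg N _)

/-- Pairing a toppling at `v` with a test function `f` adds the discrete Laplacian of `f`
at `v`. -/
lemma sum_topple {N : ℕ} [NeZero N] {c c' : ZMod N → ℕ} {v : ZMod N}
    (h : ∀ i : ZMod N, c' i + 2 * (if i = v then 1 else 0) =
      c i + (if i = v - 1 then 1 else 0) + (if i = v + 1 then 1 else 0)) (f : ZMod N → ℤ) :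
    ∑ i, (c' i : ℤ) * f i + 2 * f v = ∑ i, (c i : ℤ) * f i + f (v - 1) + f (v + 1) := by
  have key : ∑ i, ((c' i : ℤ) + 2 * (if i = v then 1 else 0)) * f i =
      ∑ i, ((c i : ℤ) + (if i = v - 1 then 1 else 0) + (if i = v + 1 then 1 else 0)) * f i :=
    Finset.sum_congr rfl fun i _ => by
      congr 1
      exact_mod_cast h i
  simpa [add_mul, Finset.sum_add_distrib, mul_assoc, ← Finset.mul_sum] using key

lemma potential_topple {N : ℕ} [NeZero N] {c c' : ZMod N → ℕ} {v w : ZMod N} (hvw : v ≠ w)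
    (h : ∀ i : ZMod N, c' i + 2 * (if i = v then 1 else 0) =
      c i + (if i = v - 1 then 1 else 0) + (if i = v + 1 then 1 else 0)) :
    potential N w c' + 2 = potential N w c := by
  have h1 := sum_topple h fun i => weight N (i - w)
  have h2 := weight_laplacian N (v - w) (sub_ne_zero.2 hvw)
  rw [show v - w - 1 = v - 1 - w by ring, show v - w + 1 = v + 1 - w by ring] at h2
  simp only [potential]
  linarith

/-- The invariants of a configuration `c` obtained from `c₀` by `n` topplings, where `t v` is the
time in `1, …, n` of the last toppling of `v`, or `0` if `v` has not toppled. -/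
structure Reached (N : ℕ) [NeZero N] (c₀ : ZMod N → ℕ) (n : ℕ) (c : ZMod N → ℕ)
    (t : ZMod N → ℕ) : Prop where
  reach : Relation.ReflTransGen (Topple N) c₀ c
  le : ∀ v, t v ≤ n
  inj : ∀ u v, 0 < t u → t u = t v → u = v
  held : ∀ v, 0 < t v →
    (if t v < t (v - 1) then 1 else 0) + (if t v < t (v + 1) then 1 else 0) ≤ c v
  pot : ∀ w, t w = 0 → potential N w c + 2 * n = potential N w c₀
  sum : ∑ i, c i = ∑ i, c₀ i

lemma Reached.step {N : ℕ} [NeZero N] {c₀ c : ZMod N → ℕ} {n : ℕ} {t : ZMod N → ℕ}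
    (h : Reached N c₀ n c t) {v : ZMod N} (hv : 2 ≤ c v) :
    ∃ c' t', Reached N c₀ (n + 1) c' t' := by
  obtain ⟨c', hc'⟩ : ∃ c' : ZMod N → ℕ, ∀ i : ZMod N, c' i + 2 * (if i = v then 1 else 0) =
      c i + (if i = v - 1 then 1 else 0) + (if i = v + 1 then 1 else 0) := by
    refine ⟨fun i => c i + (if i = v - 1 then 1 else 0) + (if i = v + 1 then 1 else 0)
      - 2 * (if i = v then 1 else 0), fun i => Nat.sub_add_cancel ?_⟩
    by_cases hi : i = v
    · subst hi
      rw [if_pos rfl]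
      omega
    · simp [hi]
  refine ⟨c', Function.update t v (n + 1), h.reach.tail ⟨v, hv, hc'⟩, ?_, ?_, ?_, ?_, ?_⟩
  · intro u
    have := h.le u
    simp only [Function.update_apply]
    split_ifs <;> omega
  · intro u u' hu huu'
    have h1 := h.le u
    have h2 := h.le u'
    have h3 := h.inj u u'
    simp only [Function.update_apply] at hu huu'
    split_ifs at hu huu' with h4 h5 h5
    · rw [h4, h5]
    · omega
    · omega
    · exact h3 hu huu'
  · intro u hu
    by_cases huv : u = v
    · -- Nothing has toppled later than `v`.
      subst huv
      have h1 := h.le (u - 1)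
      have h2 := h.le (u + 1)
      have h3 : ∀ x, ¬ n + 1 < Function.update t u (n + 1) x := by
        intro x
        have := h.le x
        simp only [Function.update_apply]
        split_ifs <;> omega
      simp [h3]
    · have h1 := hc' u
      have h2 : u = v - 1 ↔ u + 1 = v := eq_sub_iff_add_eq
      have h3 : u = v + 1 ↔ u - 1 = v := sub_eq_iff_eq_add.symm
      simp only [Function.update_apply, if_neg huv] at hu ⊢
      have h4 := h.held u hu
      simp only [huv, h2, h3, if_false] at h1
      split_ifs at h1 h4 ⊢ <;> omega
  · intro w hw
    by_cases hwv : w = v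
    · subst hwv
      simp at hw
    · rw [Function.update_of_ne hwv] at hw
      have h1 := h.pot w hw
      have h2 := potential_topple (Ne.symm hwv) hc'
      push_cast
      linarith
  · have h1 := sum_topple hc' fun _ => 1
    rw [← h.sum]
    simp only [mul_one] at h1
    have h2 : ∑ i, (c' i : ℤ) = ∑ i, (c i : ℤ) := by linarith
    exact_mod_cast h2

/-- With fewer items than edges, some vertex has never toppled: otherwise every edge accounts for
an item held by its endpoint that toppled earlier. -/
lemma Reached.exists_unfired {N : ℕ} [NeZero N] {c₀ c : ZMod N → ℕ} {n : ℕ} {t : ZMod N → ℕ}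
    (h : Reached N c₀ n c t) (hN : 1 < N) (hsum : ∑ i, c₀ i < N) : ∃ w, t w = 0 := by
  by_contra! hne
  have : Fact (1 < N) := ⟨hN⟩
  have h1 : ∑ v, ((if t v < t (v - 1) then 1 else 0) + (if t v < t (v + 1) then 1 else 0))
      ≤ ∑ v, c v := Finset.sum_le_sum fun v _ => h.held v (Nat.pos_of_ne_zero (hne v))
  -- Reindex so that both indicators at `v` concern the edge between `v` and `v + 1`.
  have h2 : ∑ v, (if t v < t (v - 1) then 1 else 0) =
      ∑ v, (if t (v + 1) < t v then 1 else 0) := by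
    rw [← Equiv.sum_comp (Equiv.addRight (1 : ZMod N))]
    simp
  have h3 : ∑ v, ((if t (v + 1) < t v then 1 else 0) + (if t v < t (v + 1) then 1 else 0))
      = ∑ _v : ZMod N, 1 := by
    refine Finset.sum_congr rfl fun v _ => ?_
    have h4 : t v ≠ t (v + 1) := fun h5 => by
      simpa using h.inj v (v + 1) (Nat.pos_of_ne_zero (hne v)) h5
    split_ifs <;> omega
  rw [Finset.sum_add_distrib, h2, ← Finset.sum_add_distrib, h3, h.sum] at h1
  simp [ZMod.card] at h1
  omega

/-- if a configuration has fewer than `N` items in total, then a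
stable configuration (every vertex holding at most one item) is reachable from
it by a finite sequence of topplings. -/
theorem sandpile_underfull_stabilizes (N : ℕ) [NeZero N]
    (c : ZMod N → ℕ)
    (hsum : ∑ i : ZMod N, c i < N) :
    ∃ c' : ZMod N → ℕ, Relation.ReflTransGen (Topple N) c c' ∧
      ∀ v : ZMod N, c' v ≤ 1 := by
  by_cases hN : 1 < N
  · by_contra! hcon
    have hall : ∀ n, ∃ c' t, Reached N c n c' t := by
      intro n
      induction n with
      | zero => exact ⟨c, fun _ => 0, .refl, by simp, by simp, by simp, by simp, rfl⟩
      | succ n ih =>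
        obtain ⟨c', t, h⟩ := ih
        obtain ⟨v, hv⟩ := hcon c' h.reach
        exact h.step hv
    -- The sum over all `w` is a bound for the initial potential that does not depend on `w`.
    obtain ⟨c', t, h⟩ := hall ((∑ w, potential N w c).toNat + 1)
    obtain ⟨w, hw⟩ := h.exists_unfired hN hsum
    have h1 := h.pot w hw
    have h2 := potential_nonneg N w c'
    have h3 : potential N w c ≤ ∑ w, potential N w c :=
      Finset.single_le_sum (fun w _ => potential_nonneg N w c) (Finset.mem_univ w)
    push_cast at h1
    omega
  · refine ⟨c, .refl, fun v => ?_⟩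
    have h1 : c v ≤ ∑ i, c i :=
      Finset.single_le_sum (fun i _ => Nat.zero_le (c i)) (Finset.mem_univ v)
    omega
end

section
/- (Necessity direction of the closed solution) Let N ≥ 1 and let c : ZMod N → ℕ be a configuration on the N-cycle with exactly N items (∑ i, c i = N). If c is a successful initial distribution, i.e., c reaches the terminal constant-one configuration by a finite sequence of topplings, then its classification invariant equals that of the terminal set: ∑ i : ZMod N, i * (c i : ZMod N) = ∑ i : ZMod N, i in ZMod N. -/
/-- A toppling at `v` preserves the invariant: it replaces the contribution `2 * v` of two items
by `(v - 1) + (v + 1)`, and these agree in `ZMod N`. -/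
theorem Topple.sum_mul_eq {N : ℕ} [NeZero N] {c c' : ZMod N → ℕ} (h : Topple N c c') :
    ∑ i : ZMod N, i * (c i : ZMod N) = ∑ i : ZMod N, i * (c' i : ZMod N) := by
  obtain ⟨v, -, h⟩ := h
  have key : ∑ i : ZMod N, i * ((c' i + 2 * (if i = v then 1 else 0) : ℕ) : ZMod N) =
      ∑ i : ZMod N,
        i * ((c i + (if i = v - 1 then 1 else 0) + (if i = v + 1 then 1 else 0) : ℕ) : ZMod N) :=
    Finset.sum_congr rfl fun i _ => by rw [h i]
  simp [mul_add, Finset.sum_add_distrib] at key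
  linear_combination -key

/-- necessity: if a configuration with exactly `N` items reaches
the terminal constant-one configuration by a finite sequence of topplings, then
its classification invariant equals that of the terminal configuration. -/
theorem sandpile_successful_implies_invariant (N : ℕ) [NeZero N]
    (c : ZMod N → ℕ)
    (hsum : ∑ i : ZMod N, c i = N)
    (h : Relation.ReflTransGen (Topple N) c (fun _ => 1)) :
    ∑ i : ZMod N, i * (c i : ZMod N) = ∑ i : ZMod N, i := by
  clear hsum
  induction h using Relation.ReflTransGen.head_induction_on with
  | refl => simp
  | head hstep _ ih => exact hstep.sum_mul_eq.trans ih
end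

section
/- (Closed solution for the k = N sandpile problem) Let N ≥ 1 and let c : ZMod N → ℕ be a configuration on the N-cycle with exactly N items (∑ i, c i = N). Then c is a successful initial distribution — c reaches the terminal constant-one configuration by a finite sequence of topplings — if and only if its classification invariant equals that of the terminal set: ∑ i : ZMod N, i * (c i : ZMod N) = ∑ i : ZMod N, i in ZMod N. -/
/-- The Laplacian of the `N`-cycle on integer-valued functions. Loops and double edges are
counted with multiplicity when `N = 1` or `N = 2`, as in `Topple`. -/
def cycleLap (N : ℕ) : (ZMod N → ℤ) →+ (ZMod N → ℤ) where
  toFun f := fun i => 2 * f i - f (i - 1) - f (i + 1)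
  map_zero' := by ext i; simp
  map_add' f g := by ext i; simp only [Pi.add_apply]; ring

lemma cycleLap_apply (N : ℕ) (f : ZMod N → ℤ) (i : ZMod N) :
    cycleLap N f i = 2 * f i - f (i - 1) - f (i + 1) := rfl

lemma cycleLap_single (N : ℕ) (v i : ZMod N) :
    cycleLap N (Pi.single v 1) i =
      2 * (if i = v then 1 else 0) - (if i = v + 1 then 1 else 0)
        - (if i = v - 1 then 1 else 0) := by
  simp only [cycleLap_apply, Pi.single_apply, sub_eq_iff_eq_add, eq_sub_iff_add_eq]

lemma sum_cycleLap (N : ℕ) [NeZero N] (f : ZMod N → ℤ) : ∑ i, cycleLap N f i = 0 := by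
  simp only [cycleLap_apply, Finset.sum_sub_distrib, ← Finset.mul_sum]
  have h1 : ∑ i, f (i - 1) = ∑ i, f i := Equiv.sum_comp (Equiv.subRight (1 : ZMod N)) f
  have h2 : ∑ i, f (i + 1) = ∑ i, f i := Equiv.sum_comp (Equiv.addRight (1 : ZMod N)) f
  rw [h1, h2]; ring

lemma topple_invariant (N : ℕ) [NeZero N] {c c' : ZMod N → ℕ} (h : Topple N c c') :
    ∑ i : ZMod N, i * (c i : ZMod N) = ∑ i : ZMod N, i * (c' i : ZMod N) := by
  obtain ⟨v, -, hv⟩ := h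
  have key : ∑ i : ZMod N, i * ((c' i + 2 * (if i = v then 1 else 0) : ℕ) : ZMod N) =
      ∑ i : ZMod N, i * ((c i + (if i = v - 1 then 1 else 0) +
        (if i = v + 1 then 1 else 0) : ℕ) : ZMod N) :=
    Finset.sum_congr rfl fun i _ => by rw [hv i]
  simp [mul_add, Finset.sum_add_distrib] at key
  linear_combination -key

/-- In an abelian group, a function on the cycle with vanishing second differences is an
arithmetic progression along the residues `0, 1, 2, …`. -/
lemma arith_of_harmonic {N : ℕ} {A : Type*} [AddCommGroup A] (x : ZMod N → A)
    (h : ∀ i, x (i + 1) + x (i - 1) = x i + x i) (n : ℕ) :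
    x n = x 0 + n • (x 1 - x 0) ∧ x (n + 1 : ZMod N) = x 0 + (n + 1) • (x 1 - x 0) := by
  induction n with
  | zero => simp
  | succ n ih =>
    refine ⟨by simpa using ih.2, ?_⟩
    have h1 := h (n + 1)
    rw [add_sub_cancel_right, ih.1, ih.2] at h1
    push_cast
    rw [eq_sub_of_add_eq h1]
    simp only [add_smul, one_smul]
    abel

lemma sum_smul_eq_zero_of_harmonic {N : ℕ} [NeZero N] {A : Type*} [AddCommGroup A]
    (x : ZMod N → A) (hx : ∀ i, x (i + 1) + x (i - 1) = x i + x i) (d : ZMod N → ℤ)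
    (h0 : ∑ i, d i = 0) (h1 : ∑ i : ZMod N, i * (d i : ZMod N) = 0) :
    ∑ i, d i • x i = 0 := by
  have hval : ∀ i : ZMod N, x i = x 0 + (i.val : ℤ) • (x 1 - x 0) := by
    intro i
    have := (arith_of_harmonic x hx i.val).1
    rwa [ZMod.natCast_zmod_val, ← natCast_zsmul] at this
  have hN : (N : ℤ) • (x 1 - x 0) = 0 := by
    have := (arith_of_harmonic x hx N).1
    rw [ZMod.natCast_self] at this
    rw [natCast_zsmul]
    exact left_eq_add.1 this
  obtain ⟨m, hm⟩ : (N : ℤ) ∣ ∑ i : ZMod N, d i * (i.val : ℤ) := by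
    rw [← ZMod.intCast_zmod_eq_zero_iff_dvd, ← h1]
    push_cast
    exact Finset.sum_congr rfl fun i _ => by rw [ZMod.natCast_zmod_val, mul_comm]
  have e : ∑ i, d i • x i = (∑ i, d i) • x 0 +
      (∑ i : ZMod N, d i * (i.val : ℤ)) • (x 1 - x 0) := by
    rw [Finset.sum_smul, Finset.sum_smul, ← Finset.sum_add_distrib]
    exact Finset.sum_congr rfl fun i _ => by rw [hval i, smul_add, mul_smul]
  rw [e, h0, hm, zero_smul, zero_add, mul_comm, mul_smul, hN, smul_zero]

/-- The Picard group of the cycle is detected by total mass and the first moment mod `N`. -/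
lemma exists_cycleLap_eq (N : ℕ) [NeZero N] (d : ZMod N → ℤ) (h0 : ∑ i, d i = 0)
    (h1 : ∑ i : ZMod N, i * (d i : ZMod N) = 0) : ∃ f, cycleLap N f = d := by
  let π := QuotientAddGroup.mk' (cycleLap N).range
  let x : ZMod N → _ := fun i => π (Pi.single i 1)
  have hx : ∀ i, x (i + 1) + x (i - 1) = x i + x i := by
    intro v
    have hπ : π (cycleLap N (Pi.single v 1)) = 0 :=
      (QuotientAddGroup.eq_zero_iff _).2 ⟨_, rfl⟩
    have e : cycleLap N (Pi.single v 1) =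
        Pi.single v 1 + Pi.single v 1 - (Pi.single (v + 1) 1 + Pi.single (v - 1) 1) := by
      ext i
      simp only [cycleLap_single, Pi.single_apply, Pi.sub_apply, Pi.add_apply]
      ring
    rw [e, map_sub, map_add, map_add] at hπ
    exact (sub_eq_zero.1 hπ).symm
  have hd : d = ∑ i, d i • (Pi.single i 1 : ZMod N → ℤ) := by
    ext j
    simp [Finset.sum_apply, Pi.single_apply]
  have hπd : π d = 0 := by
    have e : π d = ∑ i, d i • x i := by
      conv_lhs => rw [hd]
      simp only [map_sum, map_zsmul, x]
    rw [e, sum_smul_eq_zero_of_harmonic x hx d h0 h1]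
  exact (QuotientAddGroup.eq_zero_iff _).1 hπd

/-- A nonnegative firing script `f` taking `c` to the constant `1` can be executed by legal
topplings. The induction is on the total number `n` of firings in the script. -/
lemma reaches_of_script (N : ℕ) [NeZero N] (n : ℕ) : ∀ (c : ZMod N → ℕ) (f : ZMod N → ℤ),
    (∀ i, 0 ≤ f i) → ∑ i, f i = n → (∀ i, (c i : ℤ) = 1 + cycleLap N f i) →
    Relation.ReflTransGen (Topple N) c (fun _ => 1) := by
  induction n with
  | zero =>
    intro c f hf hs hc
    have hz : f = 0 := by
      ext i
      exact (Finset.sum_eq_zero_iff_of_nonneg fun i _ => hf i).1 (by simpa using hs) i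
        (Finset.mem_univ i)
    have : c = fun _ => 1 := by
      ext i
      have := hc i
      rw [hz, map_zero] at this
      simpa using this
    rw [this]
  | succ n ih =>
    intro c f hf hs hc
    by_cases hst : ∀ i, c i ≤ 1
    · have hsum : ∑ i, c i = ∑ _i : ZMod N, 1 := by
        zify
        simp only [hc, Finset.sum_add_distrib, sum_cycleLap, add_zero]
      have : c = fun _ => 1 := by
        ext i
        exact (Finset.sum_eq_sum_iff_of_le fun i _ => hst i).1 hsum i (Finset.mem_univ i)
      rw [this]
    · push Not at hst
      obtain ⟨v, hv⟩ := hst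
      have hfv : 1 ≤ f v := by
        have h1 := hc v
        rw [cycleLap_apply] at h1
        have := hf (v - 1)
        have := hf (v + 1)
        omega
      let c' : ZMod N → ℕ := fun i =>
        c i + (if i = v - 1 then 1 else 0) + (if i = v + 1 then 1 else 0)
          - 2 * (if i = v then 1 else 0)
      have hc' : ∀ i, c' i + 2 * (if i = v then 1 else 0) =
          c i + (if i = v - 1 then 1 else 0) + (if i = v + 1 then 1 else 0) := by
        intro i
        refine Nat.sub_add_cancel ?_
        by_cases hi : i = v
        · rw [if_pos hi, hi]; omega
        · rw [if_neg hi]; omega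
      refine Relation.ReflTransGen.head ⟨v, hv, hc'⟩ (ih c' (f - Pi.single v 1) ?_ ?_ ?_)
      · intro i
        rw [Pi.sub_apply, Pi.single_apply]
        split_ifs with hi
        · rw [hi]; omega
        · simpa using hf i
      · simp [Finset.sum_sub_distrib, hs]
      · intro i
        have h1 := hc i
        have h2 := congrArg (Nat.cast : ℕ → ℤ) (hc' i)
        push_cast at h2
        rw [map_sub, Pi.sub_apply, cycleLap_single]
        linarith

/-- closed solution for `k = N`: a configuration with exactly
`N` items reaches the terminal constant-one configuration by a finite sequence
of topplings iff its classification invariant equals that of the terminal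
configuration. -/
theorem sandpile_successful_iff_invariant (N : ℕ) [NeZero N]
    (c : ZMod N → ℕ)
    (hsum : ∑ i : ZMod N, c i = N) :
    Relation.ReflTransGen (Topple N) c (fun _ => 1) ↔
      ∑ i : ZMod N, i * (c i : ZMod N) = ∑ i : ZMod N, i := by
  constructor
  · intro h
    clear hsum
    induction h using Relation.ReflTransGen.head_induction_on with
    | refl => simp
    | head h _ ih => rw [topple_invariant N h, ih]
  · intro h
    obtain ⟨f, hf⟩ := exists_cycleLap_eq N (fun i => (c i : ℤ) - 1)
      (by
        rw [Finset.sum_sub_distrib, ← Nat.cast_sum, hsum]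
        simp [ZMod.card])
      (by
        push_cast
        simp only [mul_sub, mul_one, Finset.sum_sub_distrib, h, sub_self])
    -- Shifting by a constant does not change the Laplacian; `∑ |f j|` dominates every `-f i`.
    let g : ZMod N → ℤ := fun i => f i + ∑ j, |f j|
    have hg : ∀ i, 0 ≤ g i := by
      intro i
      have h1 := Finset.single_le_sum (fun j _ => abs_nonneg (f j)) (Finset.mem_univ i)
      have h2 := neg_abs_le (f i)
      simp only [g]
      linarith
    refine reaches_of_script N (∑ i, g i).toNat c g hg
      (Int.toNat_of_nonneg (Finset.sum_nonneg fun i _ => hg i)).symm fun i => ?_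
    have h1 := congrFun hf i
    simp only [cycleLap_apply, g] at h1 ⊢
    linarith
end

section
/- Let N ≥ 1 and let c : ZMod N → ℕ be a configuration on the N-cycle whose total number of items is divisible by N (in particular this holds when ∑ i, c i = N). Then the classification invariant is invariant under cyclic rotation of the configuration: ∑ i : ZMod N, i * (c (i + 1) : ZMod N) = ∑ i : ZMod N, i * (c i : ZMod N) in ZMod N. -/
/-- if the total number of items of a configuration on the
`N`-cycle is divisible by `N`, then the classification invariant is invariant
under cyclic rotation of the configuration. -/
theorem sandpile_invariant_rotation (N : ℕ) [NeZero N]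
    (c : ZMod N → ℕ)
    (hdvd : N ∣ ∑ i : ZMod N, c i) :
    ∑ i : ZMod N, i * (c (i + 1) : ZMod N) =
      ∑ i : ZMod N, i * (c i : ZMod N) := by
  -- Rotation lowers the invariant by the total number of items, which vanishes mod `N`.
  have htotal : ∑ i : ZMod N, (c i : ZMod N) = 0 := by
    rw [← Nat.cast_sum]
    exact (ZMod.natCast_eq_zero_iff _ _).mpr hdvd
  calc ∑ i : ZMod N, i * (c (i + 1) : ZMod N)
      = ∑ i : ZMod N, (i - 1) * (c i : ZMod N) :=
        Fintype.sum_equiv (Equiv.addRight 1) _ _ fun i => by simp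
    _ = ∑ i : ZMod N, i * (c i : ZMod N) := by
        simp only [sub_mul, one_mul, Finset.sum_sub_distrib, htotal, sub_zero]
end
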